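/- Let 𝔤 be a finite-dimensional real semisimple Lie algebra, let s : 𝔤 → 𝔤 be an involutive Lie algebra automorphism, and let 𝔨 = {x ∈ 𝔤 : s(x) = x} and 𝔭 = {x ∈ 𝔤 : s(x) = −x}, so that 𝔤 = 𝔨 ⊕ 𝔭. Assume the Killing form of 𝔤 is negative definite on 𝔨 and is definite (either positive definite or negative definite) on 𝔭. Let 𝔤_ℂ = ℂ ⊗_ℝ 𝔤 be the complexification and 𝔭_ℂ = ℂ ⊗_ℝ 𝔭 ⊆ 𝔤_ℂ. Suppose a₁, a₂ ∈ 𝔭 satisfy [a₁, a₂] = 0, and put a = a₁ + i·a₂ ∈ 𝔭_ℂ. The subspace 𝔭_ℂ is invariant under (ad a)² (since [𝔭,𝔭] ⊆ 𝔨 and [𝔨,𝔭] ⊆ 𝔭). If for every integer k ≥ 1 the trace of the restriction of (ad a)^{2k} to 𝔭_ℂ is zero, then a₁ = a₂ = 0. -/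

import Mathlib

open scoped TensorProduct

/-!
Write `X = ad a₁`, `Y = ad a₂` and `D = ad (a₁ + i a₂) = X + i Y`. The vanishing of the traces of
all powers of `D²` on `𝔭_ℂ` makes `D²` nilpotent there (`isNilpotent_of_trace_pow_eq_zero`).
Since `X` and `Y` commute, `(X - iY) (X + iY) = X² + Y²`, so a power of the real operator
`L = X² + Y²` kills `𝔭` (`conj_pow_mul_pow`, `sq_add_sq_pow_tmul`). By invariance of the
Killing form `B`, the operator `L` is `B`-symmetric, and `B` is definite on `𝔭`, so `L` itself
vanishes on `𝔭` (`symm_apply_eq_zero_of_pow`). Then for `x ∈ 𝔭`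

  `B (X x) (X x) + B (Y x) (Y x) = - B (L x) x = 0`,

and `X x`, `Y x` lie in `𝔨`, where `B` is negative definite; hence `X` and `Y` vanish on `𝔭`.
For `y ∈ 𝔨` the vector `X y` lies in `𝔭`, so `B (X y) (X y) = - B y (X (X y)) = 0` and `X y = 0`.
Thus `ad a₁ = ad a₂ = 0`, so `B a₁ a₁ = B a₂ a₂ = 0` and `a₁ = a₂ = 0`.
-/

open Polynomial in
/-- In characteristic zero, an endomorphism all of whose positive powers are traceless is nilpotent.
Up to a power of `X`, the characteristic polynomial is a polynomial `g` prime to `X`. The projection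
onto the Fitting component on which the endomorphism is invertible is a polynomial in it without
constant term, hence an idempotent of trace zero, hence zero. -/
theorem isNilpotent_of_trace_pow_eq_zero {K V : Type*} [Field K] [CharZero K] [AddCommGroup V]
    [Module K V] [FiniteDimensional K V] (A : Module.End K V)
    (h : ∀ k : ℕ, 1 ≤ k → LinearMap.trace K V (A ^ k) = 0) : IsNilpotent A := by
  obtain ⟨g, hg, hndvd⟩ :=
    A.charpoly.exists_eq_pow_rootMultiplicity_mul_and_not_dvd A.charpoly_monic.ne_zero 0
  set r := A.charpoly.rootMultiplicity 0
  rw [C_0, sub_zero] at hg hndvd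
  have hcop : IsCoprime ((X : K[X]) ^ (r + 1)) g :=
    (((irreducible_X (R := K)).coprime_iff_not_dvd).2 hndvd).pow_left
  obtain ⟨u, v, huv⟩ := hcop
  have hAg : A ^ r * aeval A g = 0 := by
    have := A.aeval_self_charpoly
    rw [hg] at this
    simpa using this
  have htr : ∀ q : K[X], LinearMap.trace K V (aeval A (q * X)) = 0 := by
    intro q
    induction q using Polynomial.induction_on' with
    | add p q hp hq => rw [add_mul, map_add, map_add, hp, hq, add_zero]
    | monomial n c =>
      rw [← C_mul_X_pow_eq_monomial, mul_assoc, ← pow_succ]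
      simp [h (n + 1) (by omega), Algebra.algebraMap_eq_smul_one]
  have hidem : IsIdempotentElem (aeval A (u * X ^ (r + 1))) := by
    have h1 : u * X ^ (r + 1) * (u * X ^ (r + 1)) =
        u * X ^ (r + 1) - u * v * X * (X ^ r * g) := by
      linear_combination (u * X ^ (r + 1)) * huv
    rw [IsIdempotentElem, ← map_mul, h1, map_sub, map_mul _ (u * v * X), map_mul _ (X ^ r)]
    simp [hAg]
  have hzero : aeval A (u * X ^ (r + 1)) = 0 := by
    refine LinearMap.IsIdempotentElem.eq_zero_of_trace_eq_zero hidem ?_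
    rw [pow_succ, ← mul_assoc]
    exact htr _
  refine ⟨r, ?_⟩
  have h2 : (X : K[X]) ^ r = X ^ r * (u * X ^ (r + 1)) + v * (X ^ r * g) := by
    linear_combination (-X ^ r) * huv
  have h3 := congrArg (aeval A) h2
  rw [map_add, map_mul, hzero, map_mul _ v, map_mul _ (X ^ r)] at h3
  simpa [hAg] using h3

/-- For commuting `X` and `Y`, the product `(X - iY)ᵐ (X + iY)ᵐ` equals `(X² + Y²)ᵐ`. -/
theorem conj_pow_mul_pow {A : Type*} [Ring A] [Algebra ℂ A] {X Y : A} (h : Commute X Y) (m : ℕ) :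
    (X - Complex.I • Y) ^ m * (X + Complex.I • Y) ^ m = (X * X + Y * Y) ^ m := by
  have hI : Commute X (Complex.I • Y) := h.smul_right _
  have hc : Commute (X - Complex.I • Y) (X + Complex.I • Y) :=
    ((Commute.refl X).sub_left hI.symm).add_right (hI.sub_left (Commute.refl _))
  rw [← hc.mul_pow]
  congr 1
  rw [sub_mul, mul_add, mul_add, hI.eq]
  simp only [smul_mul_assoc, mul_smul_comm, smul_smul, Complex.I_mul_I, neg_smul, one_smul]
  abel

/-- A vector killed by a power of a `B`-symmetric operator `L` is killed by `L`, provided that it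
lies in an `L`-stable subspace on which `B` is anisotropic. -/
theorem symm_apply_eq_zero_of_pow {V : Type*} [AddCommGroup V] [Module ℝ V]
    (B : LinearMap.BilinForm ℝ V) (L : Module.End ℝ V) (p : Submodule ℝ V)
    (hL : ∀ x ∈ p, L x ∈ p) (hsymm : ∀ x y, B (L x) y = B x (L y))
    (hB : ∀ x ∈ p, B x x = 0 → x = 0) (n : ℕ) :
    ∀ x ∈ p, (L ^ n) x = 0 → L x = 0 := by
  induction n with
  | zero => intro x _ h; simp_all
  | succ n ih =>
    intro x hx h
    rw [pow_succ, Module.End.mul_apply] at h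
    have h2 : L (L x) = 0 := ih (L x) (hL x hx) h
    exact hB _ (hL x hx) (by rw [hsymm, h2, map_zero])

open LieAlgebra in
/-- The complex operator `X² + Y²` is the complexification of the corresponding real operator; this
transports the vanishing of its powers from `𝔤_ℂ` down to `𝔤`. -/
theorem sq_add_sq_pow_tmul {𝔤 : Type*} [LieRing 𝔤] [LieAlgebra ℝ 𝔤] (a b : 𝔤) (m : ℕ) (x : 𝔤) :
    ((ad ℂ (ℂ ⊗[ℝ] 𝔤) ((1 : ℂ) ⊗ₜ[ℝ] a) * ad ℂ (ℂ ⊗[ℝ] 𝔤) ((1 : ℂ) ⊗ₜ[ℝ] a) +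
      ad ℂ (ℂ ⊗[ℝ] 𝔤) ((1 : ℂ) ⊗ₜ[ℝ] b) * ad ℂ (ℂ ⊗[ℝ] 𝔤) ((1 : ℂ) ⊗ₜ[ℝ] b)) ^ m)
        ((1 : ℂ) ⊗ₜ[ℝ] x) =
      (1 : ℂ) ⊗ₜ[ℝ] (((ad ℝ 𝔤 a * ad ℝ 𝔤 a + ad ℝ 𝔤 b * ad ℝ 𝔤 b) ^ m) x) := by
  induction m generalizing x with
  | zero => simp
  | succ m ih =>
    rw [pow_succ, pow_succ, Module.End.mul_apply, Module.End.mul_apply, ← ih]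
    congr 1
    simp [TensorProduct.tmul_add]

/-- Let `𝔤` be a finite-dimensional real semisimple Lie algebra with an involutive
automorphism `s`, Cartan decomposition `𝔤 = 𝔨 ⊕ 𝔭` (`𝔨`, `𝔭` the `±1`-eigenspaces of `s`),
whose Killing form is negative definite on `𝔨` and definite on `𝔭` (i.e. `(𝔤,s)` is of
compact or non-compact type). If `a₁, a₂ ∈ 𝔭` commute and `a = a₁ + i a₂` in the
complexification `𝔤_ℂ = ℂ ⊗_ℝ 𝔤` is such that the trace of the restriction of `(ad a)^{2k}`
to `𝔭_ℂ` vanishes for all `k ≥ 1`, then `a₁ = a₂ = 0`. -/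
theorem stmt_11 (𝔤 : Type*) [LieRing 𝔤] [LieAlgebra ℝ 𝔤] [FiniteDimensional ℝ 𝔤]
    [LieAlgebra.IsSemisimple ℝ 𝔤]
    (s : 𝔤 →ₗ⁅ℝ⁆ 𝔤) (hs : ∀ x, s (s x) = x)
    (𝔭 : Submodule ℝ 𝔤) (h𝔭 : ∀ x, x ∈ 𝔭 ↔ s x = -x)
    (hk_neg : ∀ x : 𝔤, s x = x → x ≠ 0 → killingForm ℝ 𝔤 x x < 0)
    (hp_def : (∀ x : 𝔤, s x = -x → x ≠ 0 → 0 < killingForm ℝ 𝔤 x x) ∨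
              (∀ x : 𝔤, s x = -x → x ≠ 0 → killingForm ℝ 𝔤 x x < 0))
    (a₁ a₂ : 𝔤) (ha₁ : a₁ ∈ 𝔭) (ha₂ : a₂ ∈ 𝔭) (hcomm : ⁅a₁, a₂⁆ = 0)
    (htr : ∀ k : ℕ, 1 ≤ k →
      ∀ hinv : ∀ x ∈ Submodule.baseChange ℂ 𝔭,
        ((LieAlgebra.ad ℂ (ℂ ⊗[ℝ] 𝔤)
            ((1 : ℂ) ⊗ₜ[ℝ] a₁ + Complex.I ⊗ₜ[ℝ] a₂)) ^ (2 * k)) x ∈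
          Submodule.baseChange ℂ 𝔭,
      LinearMap.trace ℂ (Submodule.baseChange ℂ 𝔭)
        (LinearMap.restrict
          (((LieAlgebra.ad ℂ (ℂ ⊗[ℝ] 𝔤)
              ((1 : ℂ) ⊗ₜ[ℝ] a₁ + Complex.I ⊗ₜ[ℝ] a₂)) ^ (2 * k) : Module.End ℂ (ℂ ⊗[ℝ] 𝔤)))
          hinv) = 0) :
    a₁ = 0 ∧ a₂ = 0 := by

  have hbr : ∀ x y z : 𝔤, killingForm ℝ 𝔤 ⁅x, y⁆ z = - killingForm ℝ 𝔤 y ⁅x, z⁆ :=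
    LieModule.traceForm_apply_lie_apply' ℝ 𝔤 𝔤
  have hBp : ∀ x ∈ 𝔭, killingForm ℝ 𝔤 x x = 0 → x = 0 := by
    intro x hx h
    by_contra hne
    rcases hp_def with hp | hp
    · exact (hp x ((h𝔭 x).1 hx) hne).ne' h
    · exact (hp x ((h𝔭 x).1 hx) hne).ne h
  have hpk : ∀ a ∈ 𝔭, ∀ x ∈ 𝔭, s ⁅a, x⁆ = ⁅a, x⁆ := by
    intro a ha x hx
    rw [LieHom.map_lie, (h𝔭 a).1 ha, (h𝔭 x).1 hx, neg_lie, lie_neg, neg_neg]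
  have hkp : ∀ a ∈ 𝔭, ∀ y, s y = y → ⁅a, y⁆ ∈ 𝔭 := by
    intro a ha y hy
    rw [h𝔭, LieHom.map_lie, (h𝔭 a).1 ha, hy, neg_lie]
  have hpp : ∀ a ∈ 𝔭, ∀ b ∈ 𝔭, ∀ x ∈ 𝔭, ⁅a, ⁅b, x⁆⁆ ∈ 𝔭 :=
    fun a ha b hb x hx => hkp a ha _ (hpk b hb x hx)
  set X := LieAlgebra.ad ℂ (ℂ ⊗[ℝ] 𝔤) ((1 : ℂ) ⊗ₜ[ℝ] a₁) with hX
  set Y := LieAlgebra.ad ℂ (ℂ ⊗[ℝ] 𝔤) ((1 : ℂ) ⊗ₜ[ℝ] a₂) with hY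
  set D := LieAlgebra.ad ℂ (ℂ ⊗[ℝ] 𝔤) ((1 : ℂ) ⊗ₜ[ℝ] a₁ + Complex.I ⊗ₜ[ℝ] a₂) with hD
  have hDXY : D = X + Complex.I • Y := by
    rw [hD, hX, hY, map_add, ← map_smul, TensorProduct.smul_tmul', smul_eq_mul, mul_one]
  have hXY : Commute X Y := by
    refine LinearMap.ext fun v => ?_
    simp only [Module.End.mul_apply, hX, hY, LieAlgebra.ad_apply]
    rw [leibniz_lie, LieAlgebra.ExtendScalars.bracket_tmul, hcomm, TensorProduct.tmul_zero,
      zero_lie, zero_add]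
  have hinv : ∀ x ∈ Submodule.baseChange ℂ 𝔭, (D ^ 2) x ∈ Submodule.baseChange ℂ 𝔭 := by
    intro x hx
    rw [Submodule.baseChange_eq_span] at hx
    induction hx using Submodule.span_induction with
    | zero => simp
    | add x y _ _ hx hy => rw [map_add]; exact add_mem hx hy
    | smul c x _ hx => rw [map_smul]; exact Submodule.smul_mem _ c hx
    | mem x hx =>
      obtain ⟨y, hy, rfl⟩ := hx
      simp only [pow_two, Module.End.mul_apply, hD, LieAlgebra.ad_apply, add_lie, lie_add,
        TensorProduct.mk_apply, LieAlgebra.ExtendScalars.bracket_tmul]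
      refine add_mem (add_mem ?_ ?_) (add_mem ?_ ?_) <;>
      · apply Submodule.tmul_mem_baseChange_of_mem
        apply hpp <;> assumption
  have hnil : IsNilpotent (LinearMap.restrict (D ^ 2) hinv) := by
    refine isNilpotent_of_trace_pow_eq_zero _ fun k hk => ?_
    rw [Module.End.pow_restrict]
    simp_rw [← pow_mul]
    exact htr k hk _
  obtain ⟨n, hn⟩ := hnil
  have hDn : ∀ x ∈ 𝔭, (D ^ (2 * n)) ((1 : ℂ) ⊗ₜ[ℝ] x) = 0 := by
    intro x hx
    rw [Module.End.pow_restrict] at hn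
    have := congrArg Subtype.val
      (LinearMap.congr_fun hn ⟨_, Submodule.tmul_mem_baseChange_of_mem (1 : ℂ) hx⟩)
    rw [pow_mul]
    exact this
  set L := LieAlgebra.ad ℝ 𝔤 a₁ * LieAlgebra.ad ℝ 𝔤 a₁ +
    LieAlgebra.ad ℝ 𝔤 a₂ * LieAlgebra.ad ℝ 𝔤 a₂ with hL
  have hLapp : ∀ x, L x = ⁅a₁, ⁅a₁, x⁆⁆ + ⁅a₂, ⁅a₂, x⁆⁆ := fun x => rfl
  have hLn : ∀ x ∈ 𝔭, (L ^ (2 * n)) x = 0 := by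
    intro x hx
    have h := sq_add_sq_pow_tmul a₁ a₂ (2 * n) x
    rw [← hX, ← hY, ← hL, ← conj_pow_mul_pow hXY, ← hDXY, Module.End.mul_apply, hDn x hx,
      map_zero] at h
    exact Module.FaithfullyFlat.tensorProduct_mk_injective (A := ℝ) (B := ℂ) 𝔤
      (by simpa using h.symm)
  have hL0 : ∀ x ∈ 𝔭, L x = 0 := fun x hx =>
    symm_apply_eq_zero_of_pow (killingForm ℝ 𝔤) L 𝔭
      (fun x hx => add_mem (hpp _ ha₁ _ ha₁ x hx) (hpp _ ha₂ _ ha₂ x hx))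
      (fun x y => by simp only [hLapp, map_add, LinearMap.add_apply, hbr, neg_neg])
      hBp (2 * n) x hx (hLn x hx)
  have hk_nonpos : ∀ x, s x = x → killingForm ℝ 𝔤 x x ≤ 0 := by
    intro x hx
    rcases eq_or_ne x 0 with rfl | h
    · simp
    · exact (hk_neg x hx h).le
  have hk_zero : ∀ x, s x = x → killingForm ℝ 𝔤 x x = 0 → x = 0 := by
    intro x hx h
    by_contra hne
    exact (hk_neg x hx hne).ne h
  have hsum : ∀ x ∈ 𝔭, killingForm ℝ 𝔤 ⁅a₁, x⁆ ⁅a₁, x⁆ + killingForm ℝ 𝔤 ⁅a₂, x⁆ ⁅a₂, x⁆ = 0 := by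
    intro x hx
    rw [hbr, hbr a₂, ← neg_add, ← map_add, ← hLapp, hL0 x hx, map_zero, neg_zero]
  have h1 : ∀ x ∈ 𝔭, ⁅a₁, x⁆ = 0 := fun x hx => hk_zero _ (hpk _ ha₁ x hx) (by
    linarith [hsum x hx, hk_nonpos _ (hpk _ ha₁ x hx), hk_nonpos _ (hpk _ ha₂ x hx)])
  have h2 : ∀ x ∈ 𝔭, ⁅a₂, x⁆ = 0 := fun x hx => hk_zero _ (hpk _ ha₂ x hx) (by
    linarith [hsum x hx, hk_nonpos _ (hpk _ ha₁ x hx), hk_nonpos _ (hpk _ ha₂ x hx)])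
  have hfin : ∀ a ∈ 𝔭, (∀ x ∈ 𝔭, ⁅a, x⁆ = 0) → a = 0 := by
    intro a ha h
    have hk : ∀ y, s y = y → ⁅a, y⁆ = 0 := by
      intro y hy
      refine hBp _ (hkp a ha y hy) ?_
      rw [hbr, h _ (hkp a ha y hy), map_zero, neg_zero]
    have had : LieAlgebra.ad ℝ 𝔤 a = 0 := by
      ext z
      -- `2 z = (z + s z) + (z - s z)` is the decomposition of `𝔤` into `𝔨 ⊕ 𝔭`.
      have e1 : ⁅a, z + s z⁆ = 0 := hk _ (by rw [map_add, hs, add_comm])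
      have e2 : ⁅a, z - s z⁆ = 0 := h _ (by rw [h𝔭, map_sub, hs, neg_sub])
      rw [lie_add] at e1
      rw [lie_sub, sub_eq_zero] at e2
      rw [← e2, ← two_smul ℝ] at e1
      simpa using e1
    refine hBp a ha ?_
    rw [killingForm_apply_apply, had, LinearMap.zero_comp, map_zero]
  exact ⟨hfin a₁ ha₁ h1, hfin a₂ ha₂ h2⟩
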